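/- Let G be a finite simple undirected graph and v a vertex of degree exactly 2 with distinct neighbors a and b, where a and b are not adjacent in G. Let G′ be the graph obtained from G by deleting v and adding the edge {a, b}. Then OPT(G) = OPT(G′); moreover, every feedback vertex set of G′ is a feedback vertex set of G (after noting v ∉ it), and from any feedback vertex set S of G one can obtain a feedback vertex set of G′ of size at most |S| (by replacing v with a if v ∈ S). -/

import Mathlib

/-- `U` is a feedback vertex set of `G`. -/
def IsFVS {V : Type*} (G : SimpleGraph V) (U : Set V) : Prop :=
  (G.induce (Uᶜ : Set V)).IsAcyclic

/-- Minimum size of a feedback vertex set of `G`. -/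
noncomputable def optFVS {V : Type*} (G : SimpleGraph V) : ℕ :=
  sInf {n | ∃ U : Set V, IsFVS G U ∧ U.ncard = n}

/-!
A vertex with at most one remaining neighbor lies on no cycle, so such a vertex may be moved into
or out of a feedback vertex set freely. If a feedback vertex set `S` contains `a` or `b` but not
`v`, then `v` has at most one neighbor outside `S` in either graph, and the two graphs agree
outside `S ∪ {v}`. If `S` avoids `a`, `b` and `v`, both graphs are built from the same graph `H`
in which `v` is isolated, by adding the path `a - v - b` or the edge `a - b`; each is acyclic
exactly when `H` is acyclic and does not connect `a` to `b`. If `S` contains `v`, then `v` is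
isolated in the new graph, so exchanging `v` for `a` there leaves a feedback vertex set.
-/

open SimpleGraph

section AddEdges

variable {V : Type*} {H : SimpleGraph V} {v a b : V}

theorem not_reachable_of_isIsolated (hv : H.IsIsolated v) (hvb : v ≠ b) : ¬ H.Reachable v b := by
  rintro ⟨w⟩
  cases w with
  | nil => exact hvb rfl
  | cons h _ => exact hv _ h

theorem reachable_sup_edge_iff_of_isIsolated (hv : H.IsIsolated v) (hva : v ≠ a) (hvb : v ≠ b) :
    (H ⊔ edge v a).Reachable v b ↔ H.Reachable a b := by
  classical
  constructor
  · -- The map sending `v` to `a` and fixing every other vertex contracts the new edge.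
    have hcontract (x y : V) (h : (H ⊔ edge v a).Adj x y) :
        H.Reachable (Function.update id v a x) (Function.update id v a y) := by
      rw [sup_adj, edge_adj] at h
      rcases h with h | ⟨⟨rfl, rfl⟩ | ⟨rfl, rfl⟩, -⟩
      · have hx : x ≠ v := by rintro rfl; exact hv y h
        have hy : y ≠ v := by rintro rfl; exact hv x h.symm
        simpa [hx, hy] using h.reachable
      · simp [hva.symm]
      · simp [hva.symm]
    intro h
    simp only [reachable_iff_reflTransGen] at h hcontract ⊢
    simpa [Function.onFun, hvb.symm] using h.lift' (Function.update id v a) hcontract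
  · intro h
    have hadj : (H ⊔ edge v a).Adj v a := by simp [edge_adj, hva]
    exact hadj.reachable.trans (h.mono le_sup_left)

theorem isAcyclic_sup_edge_iff_of_not_adj (hab : a ≠ b) (hnadj : ¬ H.Adj a b) :
    (H ⊔ edge a b).IsAcyclic ↔ H.IsAcyclic ∧ ¬ H.Reachable a b := by
  simp only [isAcyclic_sup_fromEdgeSet_iff, hab, hnadj, or_self, imp_false]

theorem isAcyclic_sup_edge_sup_edge_iff (hv : H.IsIsolated v) (hva : v ≠ a) (hvb : v ≠ b)
    (hab : a ≠ b) :
    (H ⊔ edge v a ⊔ edge v b).IsAcyclic ↔ H.IsAcyclic ∧ ¬ H.Reachable a b := by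
  have hnadj : ¬ (H ⊔ edge v a).Adj v b := by
    simp [edge_adj, hv b, hab.symm, hvb.symm]
  rw [isAcyclic_sup_edge_iff_of_not_adj hvb hnadj,
    isAcyclic_add_edge_iff_of_not_reachable _ _ (not_reachable_of_isIsolated hv hva),
    reachable_sup_edge_iff_of_isIsolated hv hva hvb]

end AddEdges

section Suppress

variable {V : Type*} {G : SimpleGraph V} {v a b : V}

/-- The graph obtained from `G` by deleting `v` and joining `a` to `b`. The vertex type is kept, so
`v` survives as an isolated vertex; nothing is joined when `a = b`. -/
def suppressVertex (G : SimpleGraph V) (v a b : V) : SimpleGraph V :=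
  G.deleteIncidenceSet v ⊔ edge a b

theorem suppressVertex_adj {x y : V} :
    (suppressVertex G v a b).Adj x y ↔
      (G.Adj x y ∧ x ≠ v ∧ y ≠ v) ∨ ((x = a ∧ y = b ∨ x = b ∧ y = a) ∧ x ≠ y) := by
  rw [suppressVertex, sup_adj, deleteIncidenceSet_adj, edge_adj]

theorem isIsolated_suppressVertex (hva : v ≠ a) (hvb : v ≠ b) :
    (suppressVertex G v a b).IsIsolated v := by
  simp [IsIsolated, suppressVertex_adj, hva, hvb]

theorem ne_of_neighborSet_eq_pair (hN : G.neighborSet v = {a, b}) : v ≠ a ∧ v ≠ b :=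
  ⟨Adj.ne (hN.ge (.inl rfl)), Adj.ne (hN.ge (.inr rfl))⟩

theorem isAcyclic_suppressVertex_iff (hN : G.neighborSet v = {a, b}) (hab : a ≠ b)
    (hnadj : ¬ G.Adj a b) : (suppressVertex G v a b).IsAcyclic ↔ G.IsAcyclic := by
  have hadj (x : V) : G.Adj v x ↔ x = a ∨ x = b := Set.ext_iff.mp hN x
  obtain ⟨hva, hvb⟩ := ne_of_neighborSet_eq_pair hN
  have hiso : (G.deleteIncidenceSet v).IsIsolated v := by
    simp [IsIsolated, deleteIncidenceSet_adj]
  have hG : G = G.deleteIncidenceSet v ⊔ edge v a ⊔ edge v b := by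
    ext x y
    simp only [sup_adj, deleteIncidenceSet_adj, edge_adj]
    grind [G.adj_comm]
  calc (suppressVertex G v a b).IsAcyclic
    _ ↔ (G.deleteIncidenceSet v).IsAcyclic ∧ ¬ (G.deleteIncidenceSet v).Reachable a b :=
      isAcyclic_sup_edge_iff_of_not_adj hab fun h => hnadj (G.deleteIncidenceSet_le v h)
    _ ↔ (G.deleteIncidenceSet v ⊔ edge v a ⊔ edge v b).IsAcyclic :=
      (isAcyclic_sup_edge_sup_edge_iff hiso hva hvb hab).symm
    _ ↔ G.IsAcyclic := by rw [← hG]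

theorem induce_suppressVertex {s : Set V} (v a b : s) :
    (suppressVertex G v a b).induce s = suppressVertex (G.induce s) v a b := by
  ext x y
  simp only [comap_adj, Function.Embedding.subtype_apply, suppressVertex_adj, ne_eq,
    Subtype.ext_iff]

end Suppress

section FeedbackVertexSet

variable {V W : Type*} {G G' : SimpleGraph V} {H : SimpleGraph W} {S T : Set V} {v : V}

theorem isFVS_iff_forall_isCycle :
    IsFVS G S ↔ ∀ ⦃u : V⦄ (c : G.Walk u u), c.IsCycle → ∃ x ∈ c.support, x ∈ S := by
  constructor
  · intro h u c hc
    by_contra! hcS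
    refine h (c.induce Sᶜ hcS) (Walk.IsCycle.of_map (f := (Embedding.induce Sᶜ).toHom) ?_)
    rwa [Walk.map_induce]
  · intro h u c hc
    obtain ⟨x, hx, hxS⟩ := h _ (hc.map (f := (Embedding.induce Sᶜ).toHom) Subtype.val_injective)
    rw [Walk.support_map, List.mem_map] at hx
    obtain ⟨y, -, rfl⟩ := hx
    exact y.2 hxS

theorem isFVS_univ : IsFVS G Set.univ :=
  isFVS_iff_forall_isCycle.mpr fun u c _ => ⟨u, c.start_mem_support, Set.mem_univ u⟩

theorem IsFVS.mono (hST : S ⊆ T) (h : IsFVS G S) : IsFVS G T :=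
  IsAcyclic.embedding (G.induceHomOfLE (Set.compl_subset_compl.mpr hST)) h

theorem isFVS_congr (h : ∀ x ∉ S, ∀ y ∉ S, (G.Adj x y ↔ G'.Adj x y)) :
    IsFVS G S ↔ IsFVS G' S := by
  have hind : G.induce Sᶜ = G'.induce Sᶜ := by
    ext x y
    exact h x x.2 y y.2
  rw [IsFVS, hind, IsFVS]

theorem isFVS_insert_iff (hv : (G.neighborSet v \ S).Subsingleton) :
    IsFVS G (insert v S) ↔ IsFVS G S := by
  refine ⟨fun h => isFVS_iff_forall_isCycle.mpr fun u c hc => ?_,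
    IsFVS.mono (Set.subset_insert v S)⟩
  obtain ⟨x, hxc, rfl | hxS⟩ := isFVS_iff_forall_isCycle.mp h c hc
  · -- The two neighbors of `x` on the cycle cannot both lie outside `S`.
    by_contra! hcS
    have hsub : c.toSubgraph.neighborSet x ⊆ G.neighborSet x \ S := fun y hy =>
      ⟨c.toSubgraph.neighborSet_subset x hy,
        hcS y (c.mem_verts_toSubgraph.mp (c.toSubgraph.edge_vert hy.symm))⟩
    have htwo : 1 < (c.toSubgraph.neighborSet x).ncard := by
      rw [hc.ncard_neighborSet_toSubgraph_eq_two hxc]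
      exact one_lt_two
    exact (Set.one_lt_ncard_iff_nontrivial_and_finite.mp htwo).1.not_subsingleton (hv.anti hsub)
  · exact ⟨x, hxc, hxS⟩

theorem isFVS_insert_iff_of_isIsolated (hv : G.IsIsolated v) :
    IsFVS G (insert v S) ↔ IsFVS G S :=
  isFVS_insert_iff (by simp [hv.neighborSet_eq_empty])

theorem IsFVS.diff_singleton_of_isIsolated (h : IsFVS G S) (hv : G.IsIsolated v) :
    IsFVS G (S \ {v}) := by
  rw [← isFVS_insert_iff_of_isIsolated hv, Set.insert_sdiff_singleton]
  exact h.mono (Set.subset_insert v S)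

theorem optFVS_le_ncard (h : IsFVS G S) : optFVS G ≤ S.ncard :=
  Nat.sInf_le ⟨S, h, rfl⟩

theorem exists_isFVS_ncard_eq_optFVS (G : SimpleGraph V) :
    ∃ S : Set V, IsFVS G S ∧ S.ncard = optFVS G :=
  Nat.sInf_mem (s := {n | ∃ S : Set V, IsFVS G S ∧ S.ncard = n}) ⟨_, Set.univ, isFVS_univ, rfl⟩

theorem optFVS_le_optFVS [Finite V]
    (h : ∀ S : Set V, IsFVS G S → ∃ T : Set W, IsFVS H T ∧ T.encard ≤ S.encard) :
    optFVS H ≤ optFVS G := by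
  obtain ⟨S, hS, hcard⟩ := exists_isFVS_ncard_eq_optFVS G
  obtain ⟨T, hT, hle⟩ := h S hS
  calc optFVS H
    _ ≤ T.ncard := optFVS_le_ncard hT
    _ ≤ S.ncard := ENat.toNat_le_toNat hle S.toFinite.encard_lt_top.ne
    _ = optFVS G := hcard

end FeedbackVertexSet

section SuppressFeedbackVertexSet

variable {V : Type*} {G : SimpleGraph V} {S : Set V} {v a b : V}

theorem isFVS_insert_suppressVertex_iff (h : a ∈ S ∨ b ∈ S) :
    IsFVS (suppressVertex G v a b) (insert v S) ↔ IsFVS G (insert v S) := by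
  refine isFVS_congr fun x hx y hy => ?_
  rw [suppressVertex_adj]
  grind

theorem isFVS_suppressVertex_iff (hN : G.neighborSet v = {a, b}) (hab : a ≠ b)
    (hnadj : ¬ G.Adj a b) (hvS : v ∉ S) : IsFVS (suppressVertex G v a b) S ↔ IsFVS G S := by
  by_cases hS : a ∈ S ∨ b ∈ S
  · obtain ⟨hva, hvb⟩ := ne_of_neighborSet_eq_pair hN
    have hiso : (suppressVertex G v a b).IsIsolated v := isIsolated_suppressVertex hva hvb
    have hsub : (G.neighborSet v \ S).Subsingleton := by
      rw [hN]
      rintro x ⟨rfl | rfl, hx⟩ y ⟨rfl | rfl, hy⟩ <;> simp_all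
    rw [← isFVS_insert_iff_of_isIsolated hiso, isFVS_insert_suppressVertex_iff hS,
      isFVS_insert_iff hsub]
  · obtain ⟨haS, hbS⟩ := not_or.mp hS
    let v' : ↥Sᶜ := ⟨v, hvS⟩
    let a' : ↥Sᶜ := ⟨a, haS⟩
    let b' : ↥Sᶜ := ⟨b, hbS⟩
    have hN' : (G.induce Sᶜ).neighborSet v' = {a', b'} := by
      ext x
      simpa [v', a', b', Subtype.ext_iff] using Set.ext_iff.mp hN x
    have hab' : a' ≠ b' := by simpa [a', b'] using hab
    calc IsFVS (suppressVertex G v a b) S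
      _ ↔ (suppressVertex (G.induce Sᶜ) v' a' b').IsAcyclic := by
        rw [← induce_suppressVertex, IsFVS]
      _ ↔ IsFVS G S := isAcyclic_suppressVertex_iff hN' hab' hnadj

theorem IsFVS.suppressVertex_insert_diff (h : IsFVS G S) (hva : v ≠ a) (hvb : v ≠ b) :
    IsFVS (suppressVertex G v a b) (insert a (S \ {v})) := by
  have hsub : S ⊆ insert v (insert a (S \ {v})) := by grind
  rw [← isFVS_insert_iff_of_isIsolated (isIsolated_suppressVertex hva hvb),
    isFVS_insert_suppressVertex_iff (.inl (Set.mem_insert a _))]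
  exact h.mono hsub

theorem IsFVS.exists_suppressVertex_encard_le (h : IsFVS G S) (hN : G.neighborSet v = {a, b})
    (hab : a ≠ b) (hnadj : ¬ G.Adj a b) :
    ∃ T : Set V, IsFVS (suppressVertex G v a b) T ∧ T.encard ≤ S.encard := by
  by_cases hvS : v ∈ S
  · obtain ⟨hva, hvb⟩ := ne_of_neighborSet_eq_pair hN
    refine ⟨_, h.suppressVertex_insert_diff hva hvb, ?_⟩
    calc (insert a (S \ {v})).encard
      _ ≤ (S \ {v}).encard + 1 := Set.encard_insert_le _ a
      _ = S.encard := Set.encard_sdiff_singleton_add_one hvS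
  · exact ⟨S, (isFVS_suppressVertex_iff hN hab hnadj hvS).mpr h, le_rfl⟩

theorem optFVS_suppressVertex [Finite V] (hN : G.neighborSet v = {a, b}) (hab : a ≠ b)
    (hnadj : ¬ G.Adj a b) : optFVS (suppressVertex G v a b) = optFVS G := by
  apply le_antisymm
  · exact optFVS_le_optFVS fun S hS => hS.exists_suppressVertex_encard_le hN hab hnadj
  · refine optFVS_le_optFVS fun S hS => ⟨S \ {v}, ?_, Set.encard_le_encard Set.sdiff_subset⟩
    have hvS : v ∉ S \ {v} := fun h => h.2 rfl
    obtain ⟨hva, hvb⟩ := ne_of_neighborSet_eq_pair hN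
    rw [← isFVS_suppressVertex_iff hN hab hnadj hvS]
    exact hS.diff_singleton_of_isIsolated (isIsolated_suppressVertex hva hvb)

theorem neighborSet_eq_pair_of_degree_eq_two [Fintype (G.neighborSet v)] (hdeg : G.degree v = 2)
    (hab : a ≠ b) (hva : G.Adj v a) (hvb : G.Adj v b) : G.neighborSet v = {a, b} := by
  have hcard : (G.neighborSet v).ncard = 2 := by
    rw [Set.ncard_eq_toFinset_card', Set.toFinset_card, card_neighborSet_eq_degree, hdeg]
  have hsub : {a, b} ⊆ G.neighborSet v := Set.pair_subset hva hvb
  have hle : (G.neighborSet v).ncard ≤ ({a, b} : Set V).ncard := by rw [hcard, Set.ncard_pair hab]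
  exact (Set.eq_of_subset_of_ncard_le hsub hle (Set.toFinite _)).symm

end SuppressFeedbackVertexSet

/-- Degree-two suppression rule: let `v` have degree exactly 2 with distinct nonadjacent
neighbors `a, b`, and let `G'` be obtained from `G` by deleting `v` and adding edge `{a,b}`.
Then `OPT(G) = OPT(G')`; every FVS of `G'` not containing `v` is an FVS of `G`; and from
any FVS `S` of `G` one obtains an FVS of `G'` of size at most `|S|`. -/
theorem degree_two_suppression {V : Type*} [Fintype V] [DecidableEq V]
    (G G' : SimpleGraph V) [DecidableRel G.Adj] (v a b : V)
    (hdeg : G.degree v = 2) (hab : a ≠ b) (hav : a ≠ v) (hbv : b ≠ v)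
    (hva : G.Adj v a) (hvb : G.Adj v b) (hnadj : ¬ G.Adj a b)
    (hG' : ∀ x y, G'.Adj x y ↔
      (G.Adj x y ∧ x ≠ v ∧ y ≠ v) ∨ (x = a ∧ y = b) ∨ (x = b ∧ y = a)) :
    optFVS G = optFVS G' ∧
    (∀ S : Set V, v ∉ S → IsFVS G' S → IsFVS G S) ∧
    (∀ S : Set V, IsFVS G S → ∃ T : Set V, IsFVS G' T ∧ T.ncard ≤ S.ncard) := by
  have hN : G.neighborSet v = {a, b} := neighborSet_eq_pair_of_degree_eq_two hdeg hab hva hvb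
  obtain rfl : G' = suppressVertex G v a b := by
    ext x y
    rw [hG', suppressVertex_adj]
    grind
  refine ⟨(optFVS_suppressVertex hN hab hnadj).symm,
    fun S hvS => (isFVS_suppressVertex_iff hN hab hnadj hvS).mp, fun S hS => ?_⟩
  obtain ⟨T, hT, hle⟩ := hS.exists_suppressVertex_encard_le hN hab hnadj
  exact ⟨T, hT, ENat.toNat_le_toNat hle S.toFinite.encard_lt_top.ne⟩
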